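/- Let n ≥ 1 be an integer, let γ ∈ ℝ with |γ| < 1, and let m₁, m₂ ∈ ℝ. Let C(γ) be the (n+1)×(n+1) matrix with entries C(γ)_{ij} = γ^{|i−j|}/(1 − γ²), and let M(m₁, m₂) be the (n+1)×(n+1) symmetric tridiagonal matrix with M₀₀ = M_{nn} = 1, M_{ii} = 1 + m₂ for 0 < i < n, first sub/super-diagonal entries −m₁, and all other entries 0. Then tr( C(γ) · M(m₁, m₂) ) = ( 2 + (1 + m₂)(n − 1) − 2 n γ m₁ ) / (1 − γ²). -/

import Mathlib

open Matrix

section Tridiagonal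

/-- A square matrix is tridiagonal when its entries vanish off the main diagonal and the two
diagonals adjacent to it. Indices are compared as natural numbers, so that `i + 1` does not wrap
around in `Fin n`. -/
def IsTridiagonal {M : Type*} [Zero M] {n : ℕ} (A : Matrix (Fin n) (Fin n) M) : Prop :=
  ∀ i j : Fin n, (i : ℕ) + 1 < j ∨ (j : ℕ) + 1 < i → A i j = 0

theorem IsTridiagonal.sum_sum_eq {M : Type*} [AddCommMonoid M] {n : ℕ}
    {A : Matrix (Fin (n + 1)) (Fin (n + 1)) M} (hA : IsTridiagonal A) :
    ∑ i, ∑ j, A i j =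
      ∑ i, A i i + ∑ k : Fin n, (A k.castSucc k.succ + A k.succ k.castSucc) := by
  induction n with
  | zero => simp
  | succ n ih =>
    have first_row : ∑ j : Fin (n + 1), A 0 j.succ = A 0 1 :=
      Fintype.sum_eq_single 0 fun j hj => hA 0 j.succ <| Or.inl <| by
        simpa [Fin.pos_iff_ne_zero] using hj
    have first_column : ∑ i : Fin (n + 1), A i.succ 0 = A 1 0 :=
      Fintype.sum_eq_single 0 fun i hi => hA i.succ 0 <| Or.inr <| by
        simpa [Fin.pos_iff_ne_zero] using hi
    have lower_right_block := ih (A := A.submatrix Fin.succ Fin.succ) fun i j hij =>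
      hA i.succ j.succ <| by simpa using hij
    simp only [submatrix_apply] at lower_right_block
    calc ∑ i, ∑ j, A i j
        = A 0 0 + A 0 1 + (A 1 0 + ∑ i : Fin (n + 1), ∑ j : Fin (n + 1), A i.succ j.succ) := by
          simp only [Fin.sum_univ_succ (n := n + 1), Finset.sum_add_distrib, first_row,
            first_column]
      _ = ∑ i, A i i + ∑ k : Fin (n + 1), (A k.castSucc k.succ + A k.succ k.castSucc) := by
          rw [lower_right_block, Fin.sum_univ_succ (fun i => A i i),
            Fin.sum_univ_succ (fun k : Fin (n + 1) => A k.castSucc k.succ + A k.succ k.castSucc)]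
          simp only [Fin.castSucc_zero, Fin.succ_zero_eq_one, Fin.castSucc_succ]
          abel

theorem IsTridiagonal.trace_mul_eq {R : Type*} [NonUnitalNonAssocSemiring R] {n : ℕ}
    {B : Matrix (Fin (n + 1)) (Fin (n + 1)) R} (hB : IsTridiagonal B)
    (A : Matrix (Fin (n + 1)) (Fin (n + 1)) R) :
    trace (A * B) = ∑ i, A i i * B i i +
      ∑ k : Fin n, (A k.castSucc k.succ * B k.succ k.castSucc +
        A k.succ k.castSucc * B k.castSucc k.succ) := by
  have hadamard_transpose : IsTridiagonal (A ⊙ Bᵀ) := fun i j hij => by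
    rw [hadamard_apply, transpose_apply, hB j i hij.symm, mul_zero]
  simpa only [trace, diag_apply, mul_apply, hadamard_apply, transpose_apply] using
    hadamard_transpose.sum_sum_eq

end Tridiagonal

section AutoregressiveMatrices

variable {R : Type*} [CommRing R]

/-- The covariance matrix of `n + 1` consecutive values of an AR(1) sequence with coefficient `γ`
and stationary variance `v`. Keeping `v` as a parameter, instead of its value `1 / (1 - γ ^ 2)` for
unit innovations, avoids division. -/
def ar1Covariance (n : ℕ) (γ v : R) : Matrix (Fin (n + 1)) (Fin (n + 1)) R :=
  Matrix.of fun i j => γ ^ ((i : ℤ) - (j : ℤ)).natAbs * v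

/-- The AR(1) precision matrix of `n + 1` consecutive values, with the coefficient and its square
replaced entrywise by their means `m₁` and `m₂`. -/
def meanPrecision (n : ℕ) (m₁ m₂ : R) : Matrix (Fin (n + 1)) (Fin (n + 1)) R :=
  Matrix.of fun i j =>
    if i = j then (if (i : ℕ) = 0 ∨ (i : ℕ) = n then 1 else 1 + m₂)
    else if (i : ℕ) + 1 = (j : ℕ) ∨ (j : ℕ) + 1 = (i : ℕ) then -m₁ else 0

variable {n : ℕ} (γ v m₁ m₂ : R)

theorem ar1Covariance_apply_self (i : Fin (n + 1)) : ar1Covariance n γ v i i = v := by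
  simp [ar1Covariance]

theorem ar1Covariance_castSucc_succ (k : Fin n) :
    ar1Covariance n γ v k.castSucc k.succ = γ * v := by
  simp [ar1Covariance]

theorem ar1Covariance_succ_castSucc (k : Fin n) :
    ar1Covariance n γ v k.succ k.castSucc = γ * v := by
  simp [ar1Covariance]

theorem meanPrecision_castSucc_succ (k : Fin n) :
    meanPrecision n m₁ m₂ k.castSucc k.succ = -m₁ := by
  simp [meanPrecision, Fin.castSucc_lt_succ.ne]

theorem meanPrecision_succ_castSucc (k : Fin n) :
    meanPrecision n m₁ m₂ k.succ k.castSucc = -m₁ := by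
  simp [meanPrecision, Fin.castSucc_lt_succ.ne']

theorem isTridiagonal_meanPrecision : IsTridiagonal (meanPrecision n m₁ m₂) := by
  intro i j hij
  simp only [meanPrecision, of_apply]
  rw [if_neg (by omega), if_neg (by omega)]

theorem meanPrecision_apply_self_of_interior {i : Fin (n + 1)} (hi_zero : (i : ℕ) ≠ 0)
    (hi_last : (i : ℕ) ≠ n) : meanPrecision n m₁ m₂ i i = 1 + m₂ := by
  simp only [meanPrecision, of_apply, if_true, hi_zero, hi_last, or_self, if_false]

theorem meanPrecision_zero_zero : meanPrecision n m₁ m₂ 0 0 = 1 := by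
  simp [meanPrecision]

theorem meanPrecision_last_last :
    meanPrecision n m₁ m₂ (Fin.last n) (Fin.last n) = 1 := by
  simp [meanPrecision]

theorem trace_meanPrecision (hn : 1 ≤ n) :
    trace (meanPrecision n m₁ m₂) = 2 + (1 + m₂) * ((n : R) - 1) := by
  obtain ⟨m, rfl⟩ := Nat.exists_eq_add_of_le' hn
  have interior (i : Fin m) :
      meanPrecision (m + 1) m₁ m₂ i.castSucc.succ i.castSucc.succ = 1 + m₂ :=
    meanPrecision_apply_self_of_interior m₁ m₂ (by simp) (by simp [i.isLt.ne])
  simp only [trace, diag_apply]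
  rw [Fin.sum_univ_succ, Fin.sum_univ_castSucc, Fin.succ_last, meanPrecision_zero_zero,
    meanPrecision_last_last]
  simp only [interior, Finset.sum_const, Finset.card_univ, Fintype.card_fin, nsmul_eq_mul]
  push_cast
  ring

theorem trace_ar1Covariance_mul_meanPrecision_general (hn : 1 ≤ n) :
    trace (ar1Covariance n γ v * meanPrecision n m₁ m₂) =
      (2 + (1 + m₂) * ((n : R) - 1) - 2 * (n : R) * γ * m₁) * v := by
  have diagonal_part : ∑ i, ar1Covariance n γ v i i * meanPrecision n m₁ m₂ i i =
      v * (2 + (1 + m₂) * ((n : R) - 1)) := by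
    simp only [ar1Covariance_apply_self, ← Finset.mul_sum, ← trace_meanPrecision m₁ m₂ hn, trace,
      diag_apply]
  rw [(isTridiagonal_meanPrecision m₁ m₂).trace_mul_eq, diagonal_part]
  simp only [ar1Covariance_castSucc_succ, ar1Covariance_succ_castSucc,
    meanPrecision_castSucc_succ, meanPrecision_succ_castSucc, Finset.sum_const, Finset.card_univ,
    Fintype.card_fin, nsmul_eq_mul]
  ring

end AutoregressiveMatrices

/-- Trace term of the homoscedastic variational lower bound: for `|γ| < 1`, with
`C(γ)ᵢⱼ = γ^{|i−j|}/(1 − γ²)` (the inverse of the tridiagonal matrix `Γ(γ)`) and `M(m₁, m₂)`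
the symmetric tridiagonal matrix with `M₀₀ = Mₙₙ = 1`, `Mᵢᵢ = 1 + m₂` for `0 < i < n`, first
sub/super-diagonal entries `−m₁` and `0` elsewhere, one has
`tr(C(γ) · M(m₁, m₂)) = (2 + (1 + m₂)(n − 1) − 2nγm₁)/(1 − γ²)`. -/
theorem trace_ar1Covariance_mul_meanPrecision (n : ℕ) (hn : 1 ≤ n)
    (γ : ℝ) (hγ : |γ| < 1) (m₁ m₂ : ℝ) :
    Matrix.trace
      ((Matrix.of fun i j : Fin (n + 1) =>
          γ ^ (((i : ℤ) - (j : ℤ)).natAbs) / (1 - γ ^ 2)) *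
        (Matrix.of fun i j : Fin (n + 1) =>
          if i = j then (if (i : ℕ) = 0 ∨ (i : ℕ) = n then 1 else 1 + m₂)
          else if (i : ℕ) + 1 = (j : ℕ) ∨ (j : ℕ) + 1 = (i : ℕ) then -m₁ else 0))
      = (2 + (1 + m₂) * ((n : ℝ) - 1) - 2 * (n : ℝ) * γ * m₁) / (1 - γ ^ 2) := by
  simpa only [ar1Covariance, meanPrecision, ← div_eq_mul_inv] using
    trace_ar1Covariance_mul_meanPrecision_general γ (1 - γ ^ 2)⁻¹ m₁ m₂ hn
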